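/- Fix an integer d ≥ 2. Suppose A ⊆ ℕ is d-automatic and not d-sparse. If A is stable in ℕ, then A is generic in ℕ, i.e., finitely many (possibly negative) translates of A cover ℕ. -/

import Mathlib

/-- A language is regular if it is recognized by a DFA with finitely many states. -/
def RegularLang {α : Type} (L : Set (List α)) : Prop :=
  ∃ (Q : Type) (_ : Fintype Q) (M : DFA α Q), M.accepts = L

/-- A language is sparse if it is regular and the number of its words of length at most `k`
is bounded by `C·(k^p + 1)`. -/
def SparseLang {α : Type} (L : Set (List α)) : Prop :=
  RegularLang L ∧ ∃ C p : ℕ, ∀ k : ℕ,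
    {σ ∈ L | σ.length ≤ k}.Finite ∧ {σ ∈ L | σ.length ≤ k}.ncard ≤ C * (k ^ p + 1)

/-- Evaluation of a word over `Σ = {0,…,d−1}` base `d`, least significant digit first. -/
def evalNat {d : ℕ} : List (Fin d) → ℕ
  | [] => 0
  | k :: σ => (k : ℕ) + d * evalNat σ

/-- `A ⊆ ℕ` is `d`-automatic: `{σ ∈ Σ* : [σ] ∈ A}` is regular. -/
def AutomaticN (d : ℕ) (A : Set ℕ) : Prop :=
  RegularLang {σ : List (Fin d) | evalNat σ ∈ A}

/-- The word `σ` has no trailing zeroes. -/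
def NoTrailingZeros {d : ℕ} (σ : List (Fin d)) : Prop :=
  ∀ h : σ ≠ [], ((σ.getLast h : Fin d) : ℕ) ≠ 0

/-- `A ⊆ ℕ` is `d`-sparse: its language of representations with no trailing zeroes is sparse. -/
def SparseN (d : ℕ) (A : Set ℕ) : Prop :=
  SparseLang {σ : List (Fin d) | evalNat σ ∈ A ∧ NoTrailingZeros σ}

/-- An `N`-ladder for a binary relation. -/
def HasLadder {X Y : Type*} (R : X → Y → Prop) (N : ℕ) : Prop :=
  ∃ (a : Fin (N + 1) → X) (b : Fin (N + 1) → Y), ∀ i j, R (a i) (b j) ↔ i ≤ j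

/-- A binary relation is stable if for some `N` it admits no `N`-ladder. -/
def StableRel {X Y : Type*} (R : X → Y → Prop) : Prop := ∃ N : ℕ, ¬ HasLadder R N

/-- `A ⊆ ℕ` is stable in ℕ if `x + y ∈ A` is a stable relation on ℕ. -/
def StableInN (A : Set ℕ) : Prop := StableRel fun x y : ℕ => x + y ∈ A

/-- `A ⊆ ℕ` is generic in ℕ if finitely many (possibly negative) integer translates
of `A` cover ℕ. -/
def GenericN (A : Set ℕ) : Prop :=
  ∃ T : Finset ℤ, ∀ x : ℕ, ∃ t ∈ T, ∃ a ∈ A, (x : ℤ) = t + (a : ℤ)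

/-!
Take an automaton for `A`. If no reachable live state carries two distinct loops of equal length,
then an accepted word is determined by its length together with the time of, and the letter read
at, its last visit to each state; hence polynomially many words are accepted and `A` is sparse.
Otherwise choose such a branching state `q` maximal for reachability, with loops `u`, `v` of equal
length and `δ = [v] - [u] > 0`.

Let `r` be a loop at `q` and let `x` have the same length and value `[r] + δ`. If `x` led from `q`
to a dead state, then adding `δ` to a block `u` would preserve acceptance (`u` becomes `v`) while
adding `δ` to a block `r` would destroy it (`r` becomes `x`), and words with blocks `u` followed by
blocks `r` would form arbitrarily long ladders. This applies also to `x` followed by any product of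
the loops `u` and `v`, so a branching state is reachable after reading `x`, and then so is `q` by
maximality. By induction on `i`, a word of the length of `uᵏ` and of value `[uᵏ] + i δ` leads from
`q` to a state from which `q` can be reached, hence to a live state, and a word accepted from that
state completes it. Thus arbitrarily long progressions of a fixed difference are covered by as many
translates of `A` as there are states. A Ramsey argument turns this into ladders for `A` unless `A`
is generic.
-/

open scoped Computability

/-! ### Values of words -/

section Words

variable {d : ℕ}

theorem evalNat_eq_ofDigits (σ : List (Fin d)) :
    evalNat σ = Nat.ofDigits d (σ.map Fin.val) := by
  induction σ with
  | nil => rfl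
  | cons k σ ih => simp [evalNat, Nat.ofDigits_cons, ih]

theorem evalNat_append (σ τ : List (Fin d)) :
    evalNat (σ ++ τ) = evalNat σ + d ^ σ.length * evalNat τ := by
  simp [evalNat_eq_ofDigits, Nat.ofDigits_append]

theorem bijOn_evalNat (hd : 1 < d) (l : ℕ) :
    Set.BijOn evalNat {σ : List (Fin d) | σ.length = l} {n | n < d ^ l} := by
  have hmap : Set.BijOn (List.map Fin.val) {σ : List (Fin d) | σ.length = l}
      {L | L.length = l ∧ ∀ k ∈ L, k < d} := by
    refine ⟨fun σ hσ => ⟨by simpa using hσ, by simp⟩,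
      (List.map_injective_iff.2 Fin.val_injective).injOn, fun L ⟨hL, hlt⟩ => ?_⟩
    lift L to List (Fin d) using hlt
    exact ⟨L, by simpa using hL, rfl⟩
  exact ((Nat.bijOn_ofDigits hd l).comp hmap).congr fun σ _ => (evalNat_eq_ofDigits σ).symm

/-- The `n`-fold repetition of a word. -/
def wordPow {α : Type*} (w : List α) (n : ℕ) : List α := (List.replicate n w).flatten

theorem wordPow_succ {α : Type*} (w : List α) (n : ℕ) :
    wordPow w (n + 1) = w ++ wordPow w n := by
  simp [wordPow, List.replicate_succ]

theorem wordPow_add {α : Type*} (w : List α) (m n : ℕ) :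
    wordPow w (m + n) = wordPow w m ++ wordPow w n := by
  simp [wordPow, ← List.replicate_append_replicate]

theorem length_wordPow {α : Type*} (w : List α) (n : ℕ) :
    (wordPow w n).length = n * w.length := by
  simp [wordPow]

/-- The word `τ` has the length of `σ` and exceeds it by `δ` in value. Keeping the length fixed
makes the relation stable under prefixing and suffixing words. -/
structure IsIncrement (δ : ℕ) (σ τ : List (Fin d)) : Prop where
  length_eq : σ.length = τ.length
  evalNat_eq : evalNat τ = evalNat σ + δ

namespace IsIncrement

variable {δ ε : ℕ} {σ τ : List (Fin d)}

theorem eq_of_zero (hd : 1 < d) (h : IsIncrement 0 σ τ) : σ = τ :=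
  (bijOn_evalNat hd τ.length).injOn h.length_eq rfl (by simp [h.evalNat_eq])

theorem length_pos (h : IsIncrement δ σ τ) (hδ : 0 < δ) : 0 < σ.length := by
  refine List.length_pos_iff.2 ?_
  rintro rfl
  obtain rfl : τ = [] := List.length_eq_zero_iff.1 h.length_eq.symm
  exact hδ.ne (Nat.add_left_cancel h.evalNat_eq)

theorem ne (h : IsIncrement δ σ τ) (hδ : 0 < δ) : σ ≠ τ := by
  rintro rfl
  exact hδ.ne (Nat.add_left_cancel h.evalNat_eq)

theorem append (h : IsIncrement δ σ τ) {σ' τ' : List (Fin d)} (h' : IsIncrement ε σ' τ') :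
    IsIncrement (δ + d ^ σ.length * ε) (σ ++ σ') (τ ++ τ') where
  length_eq := by simp [h.length_eq, h'.length_eq]
  evalNat_eq := by
    rw [evalNat_append, evalNat_append, h.evalNat_eq, h'.evalNat_eq, h.length_eq]
    ring

theorem append_right (h : IsIncrement δ σ τ) (ρ : List (Fin d)) :
    IsIncrement δ (σ ++ ρ) (τ ++ ρ) := by
  simpa using h.append (ε := 0) (σ' := ρ) ⟨rfl, rfl⟩

theorem add_evalNat (h : IsIncrement δ σ τ) (a b : List (Fin d)) :
    d ^ a.length * δ + evalNat (a ++ σ ++ b) = evalNat (a ++ τ ++ b) := by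
  simp only [evalNat_append, List.length_append, h.length_eq, h.evalNat_eq]
  ring

theorem exists_intermediate (hd : 1 < d) (h : IsIncrement (δ + ε) σ τ) :
    ∃ ρ, IsIncrement δ σ ρ ∧ IsIncrement ε ρ τ := by
  have hτ : evalNat τ < d ^ τ.length := (bijOn_evalNat hd _).mapsTo rfl
  have hval := h.evalNat_eq
  obtain ⟨ρ, hlen, hρ⟩ := (bijOn_evalNat hd τ.length).surjOn
    (show evalNat σ + δ < d ^ τ.length by omega)
  exact ⟨ρ, ⟨h.length_eq.trans hlen.symm, hρ⟩, ⟨hlen, by omega⟩⟩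

theorem exists_wordPow (hd : 1 < d) (h : IsIncrement δ σ τ) (n : ℕ) :
    ∃ ε, IsIncrement (n * δ + ε) (wordPow σ n) (wordPow τ n) := by
  induction n with
  | zero => exact ⟨0, rfl, by simp [wordPow]⟩
  | succ n ih =>
    obtain ⟨ε, hε⟩ := ih
    obtain ⟨B, hB⟩ := Nat.exists_eq_add_of_le' (Nat.pow_pos (n := σ.length) (zero_lt_one.trans hd))
    refine ⟨B * (n * δ + ε) + ε, ?_⟩
    rw [wordPow_succ, wordPow_succ]
    convert h.append hε using 1
    rw [hB]
    ring

theorem exists_wordPow_of_le (hd : 1 < d) (h : IsIncrement δ σ τ) {i n : ℕ} (hi : i ≤ n) :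
    ∃ ρ, IsIncrement (i * δ) (wordPow σ n) ρ := by
  obtain ⟨j, rfl⟩ := Nat.exists_eq_add_of_le hi
  obtain ⟨ε, hε⟩ := h.exists_wordPow hd (i + j)
  rw [add_mul, add_assoc] at hε
  exact (hε.exists_intermediate hd).imp fun _ => And.left

end IsIncrement

end Words

/-! ### Branching states of an automaton -/

theorem exists_rel_maximal {α : Type*} [Finite α] {r : α → α → Prop} (hrefl : ∀ x, r x x)
    (htrans : ∀ x y z, r x y → r y z → r x z) {P : α → Prop} {x : α} (hx : P x) :
    ∃ y, r x y ∧ P y ∧ ∀ z, P z → r y z → r z y := by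
  let _ : Preorder α := { le := r, le_refl := hrefl, le_trans := htrans }
  obtain ⟨y, hxy, hy⟩ := Finite.exists_le_maximal hx
  exact ⟨y, hxy, hy.prop, fun _ hz => hy.2 hz⟩

section Automata

variable {α Q : Type*} {M : DFA α Q} {p q : Q}

/-- Some word leads from `p` to `q`. -/
def Reaches (M : DFA α Q) (p q : Q) : Prop := ∃ w, M.evalFrom p w = q

/-- Some word is accepted from `p`. -/
def IsLive (M : DFA α Q) (p : Q) : Prop := ∃ w, M.evalFrom p w ∈ M.accept

/-- The state `p` is live and carries two distinct loops of equal length. Equal lengths ensure that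
neither loop is a power of the other, so that `p` is the source of exponentially many words. -/
def IsBranching (M : DFA α Q) (p : Q) : Prop :=
  IsLive M p ∧ ∃ u v, u.length = v.length ∧ u ≠ v ∧ M.evalFrom p u = p ∧ M.evalFrom p v = p

/-- A branching state that is maximal among branching states for the reachability preorder. -/
def IsTerminalBranching (M : DFA α Q) (q : Q) : Prop :=
  IsBranching M q ∧ ∀ p, IsBranching M p → Reaches M q p → Reaches M p q

theorem Reaches.refl (M : DFA α Q) (p : Q) : Reaches M p p := ⟨[], rfl⟩

theorem Reaches.evalFrom (M : DFA α Q) (p : Q) (w : List α) : Reaches M p (M.evalFrom p w) :=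
  ⟨w, rfl⟩

theorem Reaches.trans {r : Q} : Reaches M p q → Reaches M q r → Reaches M p r := by
  rintro ⟨w, rfl⟩ ⟨w', rfl⟩
  exact ⟨w ++ w', M.evalFrom_of_append _ _ _⟩

theorem IsLive.of_reaches (h : Reaches M p q) (hq : IsLive M q) : IsLive M p := by
  obtain ⟨w, rfl⟩ := h
  obtain ⟨w', hw'⟩ := hq
  exact ⟨w ++ w', by rwa [M.evalFrom_of_append]⟩

theorem IsBranching.exists_reaches_isTerminalBranching [Finite Q] (hp : IsBranching M p) :
    ∃ q, Reaches M p q ∧ IsTerminalBranching M q :=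
  exists_rel_maximal (Reaches.refl M) (fun _ _ _ => Reaches.trans) hp

theorem evalFrom_of_mem_kstar {l : Language α} (hl : ∀ w ∈ l, M.evalFrom p w = p) {w : List α}
    (hw : w ∈ l∗) : M.evalFrom p w = p := by
  obtain ⟨L, rfl, hL⟩ := Language.mem_kstar.1 hw
  clear hw
  induction L with
  | nil => rfl
  | cons x L ih =>
    obtain ⟨hx, hL⟩ := List.forall_mem_cons.1 hL
    rw [List.flatten_cons, M.evalFrom_of_append, hl x hx, ih hL]

theorem evalFrom_wordPow {w : List α} (hw : M.evalFrom p w = p) (n : ℕ) :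
    M.evalFrom p (wordPow w n) = p :=
  M.evalFrom_of_pow hw (Language.join_mem_kstar fun _ h => List.eq_of_mem_replicate h)

theorem exists_reaches_isBranching [Finite Q] {u v : List α} (hlen : u.length = v.length)
    (huv : u ≠ v) (hlive : ∀ w ∈ ({u, v} : Language α)∗, IsLive M (M.evalFrom q w)) :
    ∃ p, Reaches M q p ∧ IsBranching M p := by
  let r : Q → Q → Prop := fun p p' => ∃ w ∈ ({u, v} : Language α)∗, M.evalFrom p w = p'
  have hrefl : ∀ p, r p p := fun p => ⟨[], Language.nil_mem_kstar _, rfl⟩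
  have htrans : ∀ p p' p'', r p p' → r p' p'' → r p p'' := by
    rintro p _ _ ⟨w, hw, rfl⟩ ⟨w', hw', rfl⟩
    exact ⟨w ++ w', kstar_mul_kstar ({u, v} : Language α) ▸ Language.append_mem_mul hw hw',
      M.evalFrom_of_append _ _ _⟩
  have hstep : ∀ p, ∀ w ∈ ({u, v} : Language α), r p (M.evalFrom p w) := fun p w hw =>
    ⟨w, le_kstar (a := ({u, v} : Language α)) hw, rfl⟩
  obtain ⟨p, ⟨w, hw, rfl⟩, -, hmax⟩ :=
    exists_rel_maximal hrefl htrans (P := fun _ => True) (x := q) trivial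
  set p := M.evalFrom q w
  obtain ⟨y, -, hy⟩ := hmax _ trivial (hstep p u (Or.inl rfl))
  obtain ⟨z, -, hz⟩ := hmax _ trivial (hstep p v (Or.inr rfl))
  refine ⟨p, .evalFrom M q w, hlive w hw, (u ++ y) ++ (v ++ z), (v ++ z) ++ (u ++ y),
    ?_, ?_, ?_, ?_⟩
  · simp only [List.length_append]
    omega
  · intro h
    rw [List.append_assoc, List.append_assoc] at h
    exact huv (List.append_inj_left h hlen)
  · simp only [M.evalFrom_of_append, hy, hz]
  · simp only [M.evalFrom_of_append, hy, hz]

end Automata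

/-! ### Sparseness in the absence of branching states -/

theorem exists_eq_append_cons_of_ne {α : Type*} {w w' : List α} (hlen : w.length = w'.length)
    (hne : w ≠ w') :
    ∃ x a b y z, w = x ++ a :: y ∧ w' = x ++ b :: z ∧ a ≠ b ∧ y.length = z.length := by
  induction w generalizing w' with
  | nil => exact (hne (List.length_eq_zero_iff.1 hlen.symm).symm).elim
  | cons a w ih =>
    obtain ⟨b, w', rfl⟩ := List.exists_cons_of_length_eq_add_one hlen.symm
    by_cases hab : a = b
    · obtain ⟨x, a', b', y, z, rfl, rfl, h⟩ :=
        ih (Nat.succ.inj hlen) fun h => hne (by rw [hab, h])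
      exact ⟨a :: x, a', b', y, z, rfl, by rw [hab, List.cons_append], h⟩
    · exact ⟨[], a, b, w, w', rfl, rfl, hab, Nat.succ.inj hlen⟩

section Sparse

variable {α Q : Type*} {M : DFA α Q} {p : Q} {w w' : List α}

open Classical in
/-- The last time at which the run of `w` from `p` visits `s`, or `0` if it never does. -/
noncomputable def lastVisit (M : DFA α Q) (p : Q) (w : List α) (s : Q) : ℕ :=
  Nat.findGreatest (fun k => M.evalFrom p (w.take k) = s) w.length

theorem lastVisit_le_length (M : DFA α Q) (p : Q) (w : List α) (s : Q) :
    lastVisit M p w s ≤ w.length := by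
  classical exact Nat.findGreatest_le _

theorem length_le_lastVisit (M : DFA α Q) (p : Q) (x y : List α) :
    x.length ≤ lastVisit M p (x ++ y) (M.evalFrom p x) := by
  classical exact Nat.le_findGreatest (by simp) (by simp)

theorem evalFrom_take_lastVisit (M : DFA α Q) (p : Q) (x y : List α) :
    M.evalFrom p ((x ++ y).take (lastVisit M p (x ++ y) (M.evalFrom p x))) = M.evalFrom p x := by
  classical
  exact Nat.findGreatest_spec (P := fun k => M.evalFrom p ((x ++ y).take k) = M.evalFrom p x) 
    (m := x.length) (by simp) (by simp)

theorem eq_of_lastVisit_eq (hp : ∀ q, Reaches M p q → ¬ IsBranching M q)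
    (hlen : w.length = w'.length) (hw : IsLive M (M.evalFrom p w))
    (hvisit : lastVisit M p w = lastVisit M p w')
    (hletter : ∀ s, w[lastVisit M p w s]? = w'[lastVisit M p w' s]?) : w = w' := by
  by_contra hne
  obtain ⟨x, a, b, y, z, rfl, rfl, hab, hyz⟩ := exists_eq_append_cons_of_ne hlen hne
  set s := M.evalFrom p x with hs
  have hk := congrFun hvisit s
  have hloop := evalFrom_take_lastVisit M p x (a :: y)
  have hloop' := evalFrom_take_lastVisit M p x (b :: z)
  have hletter := hletter s
  rw [← hs, ← hk] at hloop'
  rw [← hk] at hletter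
  obtain ⟨n, hn⟩ := Nat.exists_eq_add_of_le (length_le_lastVisit M p x (a :: y))
  rw [hn] at hletter hloop hloop'
  cases n with
  | zero => exact hab (by simpa using hletter)
  | succ n =>
    rw [List.take_length_add_append, M.evalFrom_of_append, List.take_succ_cons] at hloop hloop'
    refine hp s (.evalFrom M p x) ⟨.of_reaches (.evalFrom M s (a :: y)) ?_,
      a :: y.take n, b :: z.take n, by simp [hyz], by simp [hab], hloop, hloop'⟩
    rwa [← M.evalFrom_of_append]

theorem finite_ncard_live_le [Finite α] [Finite Q]
    (hp : ∀ q, Reaches M p q → ¬ IsBranching M q) (k : ℕ) :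
    {w | IsLive M (M.evalFrom p w) ∧ w.length ≤ k}.Finite ∧
      {w | IsLive M (M.evalFrom p w) ∧ w.length ≤ k}.ncard ≤
        (k + 1) * ((k + 1) * (Nat.card α + 1)) ^ Nat.card Q := by
  let f (w : List α) : Fin (k + 1) × (Q → Fin (k + 1) × Option α) :=
    (Fin.ofNat _ w.length,
      fun s => (Fin.ofNat _ (lastVisit M p w s), w[lastVisit M p w s]?))
  have hofNat : Set.InjOn (Fin.ofNat (k + 1)) {n | n ≤ k} := by
    intro m hm n hn h
    simpa [Fin.ext_iff, Nat.mod_eq_of_lt (Nat.lt_succ_of_le hm),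
      Nat.mod_eq_of_lt (Nat.lt_succ_of_le hn)] using h
  have hf : Set.InjOn f {w | IsLive M (M.evalFrom p w) ∧ w.length ≤ k} := by
    rintro w ⟨hw, hk⟩ w' ⟨-, hk'⟩ h
    obtain ⟨hlen, hvisit⟩ := Prod.ext_iff.1 h
    have hvisit s := Prod.ext_iff.1 (congrFun hvisit s)
    exact eq_of_lastVisit_eq hp (hofNat hk hk' hlen) hw
      (funext fun s => hofNat ((lastVisit_le_length M p w s).trans hk)
        ((lastVisit_le_length M p w' s).trans hk') (hvisit s).1) fun s => (hvisit s).2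
  refine ⟨Set.Finite.of_injOn (Set.mapsTo_univ _ _) hf Set.finite_univ, ?_⟩
  have := Fintype.ofFinite Q
  calc _ ≤ (Set.univ : Set (Fin (k + 1) × (Q → Fin (k + 1) × Option α))).ncard :=
        Set.ncard_le_ncard_of_injOn f (fun _ _ => Set.mem_univ _) hf
    _ = _ := by simp [Set.ncard_univ, Nat.card_prod, Nat.card_fun, Finite.card_option]

end Sparse

theorem succ_pow_le_two_pow_mul (k n : ℕ) : (k + 1) ^ n ≤ 2 ^ n * (k ^ n + 1) := by
  rcases Nat.eq_zero_or_pos k with rfl | hk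
  · simpa using Nat.one_le_two_pow.trans (Nat.le_mul_of_pos_right _ (Nat.succ_pos _))
  · calc (k + 1) ^ n ≤ (2 * k) ^ n := Nat.pow_le_pow_left (by omega) _
      _ = 2 ^ n * k ^ n := mul_pow _ _ _
      _ ≤ 2 ^ n * (k ^ n + 1) := Nat.mul_le_mul_left _ (Nat.le_succ _)

theorem RegularLang.inter {α : Type} {L L' : Set (List α)} (h : RegularLang L)
    (h' : RegularLang L') : RegularLang (L ∩ L') :=
  Language.IsRegular.inf h h'

theorem regularLang_noTrailingZeros (d : ℕ) :
    RegularLang {σ : List (Fin d) | NoTrailingZeros σ} := by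
  refine ⟨Bool, inferInstance, ⟨fun _ k => decide ((k : ℕ) ≠ 0), true, {true}⟩, ?_⟩
  ext σ
  rw [DFA.mem_accepts]
  induction σ using List.reverseRecOn with
  | nil => exact iff_of_true rfl fun h => (h rfl).elim
  | append_singleton τ k _ =>
    rw [DFA.eval_append_singleton]
    change decide ((k : ℕ) ≠ 0) = true ↔ NoTrailingZeros (τ ++ [k])
    simp [NoTrailingZeros]

theorem sparseLang_of_forall_not_isBranching {α Q : Type} [Finite α] [Finite Q] {M : DFA α Q}
    (hM : ∀ q, Reaches M M.start q → ¬ IsBranching M q) {L : Set (List α)} (hL : RegularLang L)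
    (hLM : ∀ w ∈ L, w ∈ M.accepts) : SparseLang L := by
  set m := Nat.card Q
  refine ⟨hL, 2 ^ (m + 1) * (Nat.card α + 1) ^ m, m + 1, fun k => ?_⟩
  obtain ⟨hfin, hcard⟩ := finite_ncard_live_le hM k
  have hsub : {w ∈ L | w.length ≤ k} ⊆ {w | IsLive M (M.evalFrom M.start w) ∧ w.length ≤ k} :=
    fun w ⟨hw, hk⟩ => ⟨⟨[], hLM w hw⟩, hk⟩
  refine ⟨hfin.subset hsub, (Set.ncard_le_ncard hsub hfin).trans (hcard.trans ?_)⟩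
  calc (k + 1) * ((k + 1) * (Nat.card α + 1)) ^ m
      = (k + 1) ^ (m + 1) * (Nat.card α + 1) ^ m := by
        rw [mul_pow]
        ring
    _ ≤ 2 ^ (m + 1) * (k ^ (m + 1) + 1) * (Nat.card α + 1) ^ m :=
        Nat.mul_le_mul_right _ (succ_pow_le_two_pow_mul k (m + 1))
    _ = 2 ^ (m + 1) * (Nat.card α + 1) ^ m * (k ^ (m + 1) + 1) := by ring

theorem exists_isBranching_of_not_sparseN {d : ℕ} {A : Set ℕ} {Q : Type} [Finite Q]
    {M : DFA (Fin d) Q} (hM : M.accepts = {σ : List (Fin d) | evalNat σ ∈ A})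
    (hns : ¬ SparseN d A) : ∃ q, Reaches M M.start q ∧ IsBranching M q := by
  by_contra! hp
  have hreg : RegularLang {σ : List (Fin d) | evalNat σ ∈ A} :=
    ⟨Q, Fintype.ofFinite Q, M, hM⟩
  exact hns <| sparseLang_of_forall_not_isBranching hp
    (hreg.inter (regularLang_noTrailingZeros d)) fun w hw => hM ▸ hw.1

/-! ### Stability at a terminal branching state -/

section Stability

variable {d : ℕ} {A : Set ℕ}

theorem not_stableInN_of_isIncrement {a b s s' r x : List (Fin d)} {δ : ℕ}
    (hs : IsIncrement δ s s') (hr : IsIncrement δ r x) (hsr : s.length = r.length)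
    (hmem : ∀ i j k, evalNat (a ++ wordPow s i ++ s' ++ (wordPow s j ++ wordPow r k ++ b)) ∈ A)
    (hnot : ∀ i j k, evalNat (a ++ wordPow s i ++ wordPow r j ++ x ++ (wordPow r k ++ b)) ∉ A) :
    ¬ StableInN A := by
  rintro ⟨N, hN⟩
  refine hN ⟨fun i => d ^ (a.length + i * s.length) * δ,
    fun j => evalNat (a ++ wordPow s (j + 1) ++ wordPow r (N - j) ++ b), fun ⟨i, hi⟩ ⟨j, hj⟩ => ?_⟩
  rw [Fin.mk_le_mk]
  rcases le_or_gt i j with hij | hij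
  · obtain ⟨e, rfl⟩ := Nat.exists_eq_add_of_le hij
    have hblock : a ++ wordPow s (i + e + 1) ++ wordPow r (N - (i + e)) ++ b =
        (a ++ wordPow s i) ++ s ++ (wordPow s e ++ wordPow r (N - (i + e)) ++ b) := by
      simp only [add_assoc i, wordPow_add s i, wordPow_succ, List.append_assoc]
    have hpos : a.length + i * s.length = (a ++ wordPow s i).length := by
      rw [List.length_append, length_wordPow]
    refine iff_of_true ?_ hij
    beta_reduce
    rw [hblock, hpos, hs.add_evalNat]
    exact hmem _ _ _
  · obtain ⟨e, rfl⟩ : ∃ e, i = j + 1 + e := Nat.exists_eq_add_of_le hij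
    obtain ⟨f, hf⟩ : ∃ f, N - j = e + (f + 1) := ⟨N - j - e - 1, by omega⟩
    have hblock : a ++ wordPow s (j + 1) ++ wordPow r (N - j) ++ b =
        (a ++ wordPow s (j + 1) ++ wordPow r e) ++ r ++ (wordPow r f ++ b) := by
      simp only [hf, wordPow_add r e, wordPow_succ r, List.append_assoc]
    have hpos : a.length + (j + 1 + e) * s.length =
        (a ++ wordPow s (j + 1) ++ wordPow r e).length := by
      simp only [List.length_append, length_wordPow, hsr]
      ring
    refine iff_of_false ?_ hij.not_ge
    beta_reduce
    rw [hblock, hpos, hr.add_evalNat]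
    exact hnot _ _ _

variable {Q : Type*} {M : DFA (Fin d) Q} {q : Q}

theorem isLive_evalFrom_of_isIncrement_of_length_eq
    (hM : M.accepts = {σ : List (Fin d) | evalNat σ ∈ A}) (hst : StableInN A)
    (hq : Reaches M M.start q) (hlive : IsLive M q) {s s' r x : List (Fin d)} {δ : ℕ}
    (hs : M.evalFrom q s = q) (hs' : M.evalFrom q s' = q) (hr : M.evalFrom q r = q)
    (hss' : IsIncrement δ s s') (hrx : IsIncrement δ r x) (hsr : s.length = r.length) :
    IsLive M (M.evalFrom q x) := by
  have hA : ∀ σ, evalNat σ ∈ A ↔ M.evalFrom M.start σ ∈ M.accept := fun σ =>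
    (Set.ext_iff.1 hM σ).symm
  obtain ⟨a, ha⟩ := hq
  obtain ⟨b, hb⟩ := hlive
  by_contra hdead
  refine not_stableInN_of_isIncrement (a := a) (b := b) hss' hrx hsr (fun i j k => ?_)
    (fun i j k hmem => ?_) hst
  · simpa only [hA, M.evalFrom_of_append, ha, evalFrom_wordPow hs, hs', evalFrom_wordPow hr]
      using hb
  · simp only [hA, M.evalFrom_of_append, ha, evalFrom_wordPow hs, evalFrom_wordPow hr] at hmem
    exact hdead ⟨wordPow r k ++ b, by rwa [M.evalFrom_of_append]⟩

theorem isLive_evalFrom_of_isIncrement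
    (hM : M.accepts = {σ : List (Fin d) | evalNat σ ∈ A}) (hst : StableInN A)
    (hq : Reaches M M.start q) (hlive : IsLive M q) {u v r x : List (Fin d)} {δ : ℕ} (hδ : 0 < δ)
    (hu : M.evalFrom q u = q) (hv : M.evalFrom q v = q) (hr : M.evalFrom q r = q)
    (huv : IsIncrement δ u v) (hrx : IsIncrement δ r x) : IsLive M (M.evalFrom q x) := by
  obtain ⟨m, hm⟩ := Nat.exists_eq_add_of_le' (huv.length_pos hδ)
  obtain ⟨n, hn⟩ := Nat.exists_eq_add_of_le' (hrx.length_pos hδ)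
  have huv' := huv.append_right (wordPow u n)
  have hrx' := hrx.append_right (wordPow r m)
  have hpad : IsLive M (M.evalFrom q (x ++ wordPow r m)) := by
    refine isLive_evalFrom_of_isIncrement_of_length_eq hM hst hq hlive ?_ ?_ ?_ huv' hrx' ?_
    · rw [M.evalFrom_of_append, hu, evalFrom_wordPow hu]
    · rw [M.evalFrom_of_append, hv, evalFrom_wordPow hu]
    · rw [M.evalFrom_of_append, hr, evalFrom_wordPow hr]
    · simp only [List.length_append, length_wordPow, hm, hn]
      ring
  rw [M.evalFrom_of_append] at hpad
  exact hpad.of_reaches (.evalFrom M _ _)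

theorem IsTerminalBranching.reaches_of_isIncrement [Finite Q]
    (hM : M.accepts = {σ : List (Fin d) | evalNat σ ∈ A}) (hst : StableInN A)
    (hq : Reaches M M.start q) (hbr : IsTerminalBranching M q) {u v r x : List (Fin d)} {δ : ℕ}
    (hδ : 0 < δ) (hu : M.evalFrom q u = q) (hv : M.evalFrom q v = q) (hr : M.evalFrom q r = q)
    (huv : IsIncrement δ u v) (hrx : IsIncrement δ r x) : Reaches M (M.evalFrom q x) q := by
  obtain ⟨p, hxp, hp⟩ : ∃ p, Reaches M (M.evalFrom q x) p ∧ IsBranching M p := by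
    refine exists_reaches_isBranching huv.length_eq (huv.ne hδ) fun t ht => ?_
    have htq : M.evalFrom q t = q :=
      evalFrom_of_mem_kstar (by rintro w (rfl | rfl) <;> assumption) ht
    rw [← M.evalFrom_of_append]
    exact isLive_evalFrom_of_isIncrement hM hst hq hbr.1.1 hδ hu hv
      (by rw [M.evalFrom_of_append, hr, htq]) huv (hrx.append_right t)
  exact hxp.trans (hbr.2 p hp ((Reaches.evalFrom M q x).trans hxp))

theorem IsTerminalBranching.reaches_of_isIncrement_mul [Finite Q] (hd : 1 < d)
    (hM : M.accepts = {σ : List (Fin d) | evalNat σ ∈ A}) (hst : StableInN A)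
    (hq : Reaches M M.start q) (hbr : IsTerminalBranching M q) {u v r z : List (Fin d)} {δ : ℕ}
    (hδ : 0 < δ) (hu : M.evalFrom q u = q) (hv : M.evalFrom q v = q) (hr : M.evalFrom q r = q)
    (huv : IsIncrement δ u v) (i : ℕ) (hz : IsIncrement (i * δ) r z) :
    Reaches M (M.evalFrom q z) q := by
  induction i generalizing z with
  | zero =>
    rw [zero_mul] at hz
    rw [← hz.eq_of_zero hd, hr]
    exact .refl M q
  | succ i ih =>
    rw [add_mul, one_mul] at hz
    obtain ⟨z', hz', hz'z⟩ := hz.exists_intermediate hd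
    obtain ⟨y, hy⟩ := ih hz'
    have hzy := hbr.reaches_of_isIncrement hM hst hq hδ hu hv (r := z' ++ y)
      (by rw [M.evalFrom_of_append, hy]) huv (hz'z.append_right y)
    rw [M.evalFrom_of_append] at hzy
    exact (Reaches.evalFrom M _ y).trans hzy

theorem IsBranching.exists_isIncrement (hd : 1 < d) (hq : IsBranching M q) :
    ∃ u v δ, 0 < δ ∧ M.evalFrom q u = q ∧ M.evalFrom q v = q ∧ IsIncrement δ u v := by
  obtain ⟨-, u, v, hlen, hne, hu, hv⟩ := hq
  wlog hlt : evalNat u < evalNat v generalizing u v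
  · refine this v u hlen.symm hne.symm hv hu (lt_of_le_of_ne (not_lt.1 hlt) fun h => hne ?_)
    exact (bijOn_evalNat hd v.length).injOn hlen rfl h.symm
  exact ⟨u, v, evalNat v - evalNat u, Nat.sub_pos_of_lt hlt, hu, hv, hlen, by omega⟩

theorem IsTerminalBranching.exists_forall_mul_add_mem [Finite Q] (hd : 1 < d)
    (hM : M.accepts = {σ : List (Fin d) | evalNat σ ∈ A}) (hst : StableInN A)
    (hq : Reaches M M.start q) (hbr : IsTerminalBranching M q) :
    ∃ D > 0, ∀ n : ℕ, ∃ y : Q → ℕ, ∀ i ≤ n, ∃ p, i * D + y p ∈ A := by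
  obtain ⟨u, v, δ, hδ, hu, hv, huv⟩ := hbr.1.exists_isIncrement hd
  have hcompletion : ∀ p, IsLive M p → ∃ b, M.evalFrom p b ∈ M.accept := fun _ => id
  choose! b hb using hcompletion
  obtain ⟨a, ha⟩ := id hq
  refine ⟨d ^ a.length * δ, by positivity, fun n =>
    ⟨fun p => evalNat (a ++ wordPow u n ++ b p), fun i hi => ?_⟩⟩
  obtain ⟨z, hz⟩ := huv.exists_wordPow_of_le hd hi
  have hlive : IsLive M (M.evalFrom q z) := hbr.1.1.of_reaches
    (hbr.reaches_of_isIncrement_mul hd hM hst hq hδ hu hv (evalFrom_wordPow hu n) huv i hz)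
  refine ⟨M.evalFrom q z, ?_⟩
  rw [mul_left_comm, hz.add_evalNat]
  refine (Set.ext_iff.1 hM _).1 (?_ : M.evalFrom M.start _ ∈ M.accept)
  rw [M.evalFrom_of_append, M.evalFrom_of_append, ha]
  exact hb _ hlive

end Stability

/-! ### Genericity from bounded covers of progressions -/

theorem exists_strictMono_monochromatic {κ : Type*} [Finite κ] (col : ℕ → ℕ → κ) :
    ∃ φ : ℕ → ℕ, StrictMono φ ∧ ∃ c, ∀ m n, m < n → col (φ m) (φ n) = c := by
  let U := Filter.hyperfilter ℕ
  have hlim (f : ℕ → κ) : ∃ c, ∀ᶠ n in U, f n = c :=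
    Ultrafilter.eventually_exists_iff.1 (.of_forall fun n => ⟨f n, rfl⟩)
  choose lim hlim' using fun m => hlim (col m)
  obtain ⟨c, hc⟩ := hlim lim
  obtain ⟨φ, -, hφ⟩ := exists_seq_of_forall_finset_exists (fun n => lim n = c)
    (fun m n => m < n ∧ col m n = c) fun F hF => by
      have hF' : ∀ m ∈ F, ∀ᶠ n in U, m < n ∧ col m n = c := fun m hm =>
        ((Filter.eventually_gt_atTop m).filter_mono Nat.hyperfilter_le_atTop).and
          (hF m hm ▸ hlim' m)
      exact (hc.and ((Filter.eventually_all_finset F).2 hF')).exists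
  exact ⟨φ, fun m n hmn => (hφ m n hmn).1, c, fun m n hmn => (hφ m n hmn).2⟩

theorem not_stableRel_of_finite_union {X Y κ : Type*} [Finite κ] {R : X → Y → Prop} (x : ℕ → X)
    (y : ℕ → κ → Y) (hlt : ∀ m n, m < n → ∃ c, R (x m) (y n c))
    (hgt : ∀ m n, n < m → ∀ c, ¬ R (x m) (y n c)) : ¬ StableRel R := by
  rintro ⟨N, hN⟩
  have : Nonempty κ := ⟨(hlt 0 1 one_pos).choose⟩
  choose! col hcol using hlt
  obtain ⟨φ, hφ, c, hc⟩ := exists_strictMono_monochromatic col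
  refine hN ⟨fun i => x (φ (2 * i)), fun j => y (φ (2 * j + 1)) c, fun ⟨i, _⟩ ⟨j, _⟩ => ?_⟩
  rw [Fin.mk_le_mk]
  rcases le_or_gt i j with hij | hij
  · have hlt : 2 * i < 2 * j + 1 := by omega
    exact iff_of_true (hc _ _ hlt ▸ hcol _ _ (hφ hlt)) hij
  · exact iff_of_false (hgt _ _ (hφ (show 2 * j + 1 < 2 * i by omega)) c) hij.not_ge

theorem genericN_of_forall_exists_mul_add_mem {A : Set ℕ} {D : ℕ} (hD : 0 < D) (F : Finset ℕ)
    (hF : ∀ a, ∃ y ∈ F, a * D + y ∈ A) : GenericN A := by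
  classical
  refine ⟨(F ×ˢ Finset.range D).image fun p => -((p.1 : ℤ) + p.2), fun x => ?_⟩
  obtain ⟨a, e, he, hx⟩ : ∃ a e, e < D ∧ x + e = a * D := by
    refine ⟨(x + D - 1) / D, D - 1 - (x + D - 1) % D, by omega, ?_⟩
    have hdiv := Nat.div_add_mod' (x + D - 1) D
    have hmod := Nat.mod_lt (x + D - 1) hD
    omega
  obtain ⟨y, hy, hyA⟩ := hF a
  exact ⟨-((y : ℤ) + e), Finset.mem_image.2 ⟨(y, e), by simp [hy, he], rfl⟩, _, hyA, by omega⟩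

theorem genericN_of_forall_exists_cover {A : Set ℕ} (hst : StableInN A) {κ : Type*} [Finite κ]
    {D : ℕ} (hD : 0 < D)
    (hcov : ∀ n : ℕ, ∃ y : κ → ℕ, ∀ i ≤ n, ∃ c, i * D + y c ∈ A) : GenericN A := by
  classical
  have := Fintype.ofFinite κ
  by_contra hgen
  have havoid (F : Finset ℕ) : ∃ a, ∀ y ∈ F, a * D + y ∉ A := by
    by_contra! hF
    exact hgen (genericN_of_forall_exists_mul_add_mem hD F hF)
  obtain ⟨f, -, hf⟩ := exists_seq_of_forall_finset_exists (α := ℕ × (κ → ℕ)) (fun _ => True)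
    (fun p p' => (∃ c, p.1 * D + p'.2 c ∈ A) ∧ ∀ c, p'.1 * D + p.2 c ∉ A) fun F _ => by
      obtain ⟨a, ha⟩ := havoid (F.biUnion fun p => Finset.univ.image p.2)
      obtain ⟨y, hy⟩ := hcov (F.sup Prod.fst)
      refine ⟨(a, y), trivial, fun p hp => ⟨hy _ (Finset.le_sup (f := Prod.fst) hp), fun c => ?_⟩⟩
      exact ha _ (Finset.mem_biUnion.2 ⟨p, hp, Finset.mem_image_of_mem _ (Finset.mem_univ c)⟩)
  exact not_stableRel_of_finite_union (fun m => (f m).1 * D) (fun n => (f n).2)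
    (fun m n hmn => (hf m n hmn).1) (fun m n hnm => (hf n m hnm).2) hst

theorem stmt9 (d : ℕ) (hd : 2 ≤ d) (A : Set ℕ)
    (hauto : AutomaticN d A) (hns : ¬ SparseN d A) (hst : StableInN A) :
    GenericN A := by
  obtain ⟨Q, _, M, hM⟩ := hauto
  obtain ⟨p, hp, hbr⟩ := exists_isBranching_of_not_sparseN hM hns
  obtain ⟨q, hpq, hq⟩ := hbr.exists_reaches_isTerminalBranching
  obtain ⟨D, hD, hcov⟩ := hq.exists_forall_mul_add_mem hd hM hst (hp.trans hpq)
  exact genericN_of_forall_exists_cover hst hD hcov
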